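/- Let K be an infinite field and S = K[x_1,...,x_n]. If I is a Borel-fixed ideal of S (fixed by all upper triangular invertible matrices), J is an opposite Borel-fixed ideal of S (its image under the coordinate reversal x_i ↦ x_{n-i+1} is Borel-fixed), and i > 0, then the Krull dimension of Tor_i^S(S/I, S/J) is zero. -/

import Mathlib

open MvPolynomial TensorProduct CategoryTheory

noncomputable section

/-- The polynomial ring `S = K[x_1,...,x_n]`, standard graded. -/
abbrev PS (K : Type) [Field K] (n : ℕ) : Type := MvPolynomial (Fin n) K

variable (K : Type) [Field K] (n : ℕ)

/-- An ideal of `S` is homogeneous if it contains all homogeneous components of its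
elements. -/
def IsHomog (I : Ideal (PS K n)) : Prop :=
  ∀ f ∈ I, ∀ d : ℕ, MvPolynomial.homogeneousComponent d f ∈ I

/-- The change of coordinates of `S` induced by `g ∈ GL_n(K)`, determined by
`g(x_i) = ∑_j g_{ji} x_j`. -/
def coordChange (g : GL (Fin n) K) : PS K n →ₐ[K] PS K n :=
  MvPolynomial.aeval (fun i => ∑ j, ((g : Matrix (Fin n) (Fin n) K) j i) • MvPolynomial.X j)

/-- A property `P` holds for a general change of coordinates `g ∈ GL_n(K)` if there is a
nonempty Zariski open subset `U ⊆ GL_n(K)` on which it holds; equivalently (as `GL_n(K)` is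
an irreducible variety over the infinite field `K`) there is a nonzero polynomial `F` in the
matrix entries such that `P g` holds whenever `F` does not vanish at `g`. -/
def generally (P : GL (Fin n) K → Prop) : Prop :=
  ∃ F : MvPolynomial (Fin n × Fin n) K, F ≠ 0 ∧
    ∀ g : GL (Fin n) K,
      MvPolynomial.eval (fun p => (g : Matrix (Fin n) (Fin n) K) p.1 p.2) F ≠ 0 → P g

/-- `I` is Borel-fixed: `b(I) = I` for every upper triangular invertible matrix `b`. -/
def IsBorelFixed (I : Ideal (PS K n)) : Prop :=
  ∀ b : GL (Fin n) K, (∀ i j : Fin n, j < i → (b : Matrix (Fin n) (Fin n) K) i j = 0) →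
    Ideal.map (coordChange K n b) I = I

/-- The coordinate reversal `op : x_i ↦ x_{n-i+1}`. -/
def opMap : PS K n →ₐ[K] PS K n :=
  MvPolynomial.aeval (fun i => MvPolynomial.X i.rev)

/-!
Over an infinite field a Borel-fixed ideal is monomial, and it is stable under replacing every `x_j`
with `j ≥ k` by `x_k`; for an opposite Borel-fixed ideal the same holds with `j ≤ k`. Fix `k` and
let `I'` be generated by the images of the monomials of `I` under `x_j ↦ 1` for `j ≥ k`, and `J'`
by the images of those of `J` under `x_j ↦ 1` for `j < k`. The stability puts `x_k` in the radicals
of `(I : I')` and `(J : J')`.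

Multiplication on `S/I` by an element of `(I : I')` factors through `S/I'`, and likewise for `J`, so
`(I : I')(J : J')` annihilates `Tor_i(S/I, S/J)` as soon as `Tor_i(S/I', S/J') = 0`. This vanishing
holds by flat base change, because `I'` and `J'` are extended from polynomial rings in disjoint sets
of variables. Hence every variable lies in the radical of the annihilator of `Tor_i(S/I, S/J)`.
-/

universe u

section Linearity

variable {R C D : Type*} [Ring R] [Category* C] [Category* D]

lemma homologyFunctor_map_smul [Preadditive D] [Linear R D] [CategoryWithHomology D] {ι : Type*}
    {c : ComplexShape ι} {A B : HomologicalComplex D c} (r : R) (f : A ⟶ B) (n : ι) :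
    (HomologicalComplex.homologyFunctor D c n).map (r • f) =
      r • (HomologicalComplex.homologyFunctor D c n).map f :=
  ShortComplex.homologyMap_smul ((HomologicalComplex.shortComplexFunctor D c n).map f) r

variable [Abelian C] [HasProjectiveResolutions C] [Abelian D] [Linear R D]

lemma leftDerived_map_smul [Linear R C] (F : C ⥤ D) [F.Additive] [F.Linear R] (n : ℕ) (r : R)
    {X Y : C} (f : X ⟶ Y) : (F.leftDerived n).map (r • f) = r • (F.leftDerived n).map f := by
  let P := projectiveResolution X
  let Q := projectiveResolution Y
  let g := ProjectiveResolution.lift f P Q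
  have hg : g ≫ Q.π = P.π ≫ (ChainComplex.single₀ C).map f :=
    ProjectiveResolution.lift_commutes f P Q
  have hrg : (r • g) ≫ Q.π = P.π ≫ (ChainComplex.single₀ C).map (r • f) := by
    rw [Linear.smul_comp, hg, ← Linear.comp_smul]
    congr 1
    ext
    simp only [ChainComplex.single₀_obj_zero, HomologicalComplex.smul_f_apply,
      ChainComplex.single₀_map_f_zero]
    rfl
  rw [F.leftDerived_map_eq n f g hg, F.leftDerived_map_eq n (r • f) (r • g) hrg]
  simp only [Functor.comp_map, Functor.map_smul, homologyFunctor_map_smul, Linear.smul_comp,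
    Linear.comp_smul]

lemma leftDerived_smul_app {F G : C ⥤ D} [F.Additive] [G.Additive] (n : ℕ) (r : R) (α : F ⟶ G)
    (X : C) : (NatTrans.leftDerived (r • α) n).app X = r • (NatTrans.leftDerived α n).app X := by
  have hmap (P : ChainComplex C ℕ) : (NatTrans.mapHomologicalComplex (r • α) _).app P =
      r • (NatTrans.mapHomologicalComplex α _).app P := rfl
  simp only [ProjectiveResolution.leftDerived_app_eq _ (projectiveResolution X), hmap,
    homologyFunctor_map_smul, Linear.smul_comp, Linear.comp_smul]

end Linearity

section Tor

open MonoidalCategory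

variable {R C : Type*} [CommRing R] [Category* C] [Abelian C] [Linear R C] [MonoidalCategory C]
  [MonoidalPreadditive C] [MonoidalLinear R C] [HasProjectiveResolutions C]

lemma tor_obj_map_smul (n : ℕ) (X : C) (r : R) {Y Z : C} (f : Y ⟶ Z) :
    ((Tor C n).obj X).map (r • f) = r • ((Tor C n).obj X).map f :=
  leftDerived_map_smul _ n r f

lemma tor_map_smul_app (n : ℕ) (r : R) {X Y : C} (f : X ⟶ Y) (Z : C) :
    ((Tor C n).map (r • f)).app Z = r • ((Tor C n).map f).app Z := by
  have htensor : (tensoringLeft C).map (r • f) = r • (tensoringLeft C).map f := by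
    ext W
    exact MonoidalLinear.smul_whiskerRight r f W
  change (NatTrans.leftDerived ((tensoringLeft C).map (r • f)) n).app Z = _
  rw [htensor, leftDerived_smul_app]
  rfl

open Limits in
lemma mul_smul_id_tor_eq_zero {n : ℕ} {X X' Y Y' : C} {r s : R} {a : X ⟶ X'} {b : X' ⟶ X}
    {c : Y ⟶ Y'} {d : Y' ⟶ Y} (hab : a ≫ b = r • 𝟙 X) (hcd : c ≫ d = s • 𝟙 Y)
    (hzero : IsZero (((Tor C n).obj X').obj Y')) :
    (r * s) • 𝟙 (((Tor C n).obj X).obj Y) = 0 := by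
  have hr : ((Tor C n).map a).app Y ≫ ((Tor C n).map b).app Y = r • 𝟙 _ := by
    rw [← NatTrans.comp_app, ← Functor.map_comp, hab, tor_map_smul_app,
      CategoryTheory.Functor.map_id, NatTrans.id_app]
  have hs : s • 𝟙 (((Tor C n).obj X').obj Y) = 0 := by
    rw [← CategoryTheory.Functor.map_id, ← tor_obj_map_smul, ← hcd, Functor.map_comp,
      hzero.eq_zero_of_tgt (((Tor C n).obj X').map c), zero_comp]
  calc (r * s) • 𝟙 (((Tor C n).obj X).obj Y)
      = ((Tor C n).map a).app Y ≫ (s • 𝟙 _) ≫ ((Tor C n).map b).app Y := by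
        rw [mul_comm, mul_smul, ← hr, Linear.smul_comp, Category.id_comp, Linear.comp_smul]
    _ = 0 := by rw [hs, zero_comp, comp_zero]

end Tor

section Colon

variable {S : Type u} [CommRing S] {M L : Type u} [AddCommGroup M] [Module S M] [AddCommGroup L]
  [Module S L]

lemma exists_comp_eq_smul_id_of_mem_colon {N N' : Submodule S M} (h : N ≤ N') {r : S}
    (hr : r ∈ N.colon N') :
    ∃ (a : ModuleCat.of S (M ⧸ N) ⟶ ModuleCat.of S (M ⧸ N'))
      (b : ModuleCat.of S (M ⧸ N') ⟶ ModuleCat.of S (M ⧸ N)), a ≫ b = r • 𝟙 _ := by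
  refine ⟨ModuleCat.ofHom (N.mapQ N' LinearMap.id h),
    ModuleCat.ofHom (N'.mapQ N (LinearMap.lsmul S M r) (Submodule.mem_colon.mp hr)), ?_⟩
  ext x
  rfl

lemma colon_mul_colon_le_annihilator_tor {N N' : Submodule S M} {P P' : Submodule S L}
    (hN : N ≤ N') (hP : P ≤ P') {n : ℕ}
    (hzero : Limits.IsZero (((Tor (ModuleCat S) n).obj (.of S (M ⧸ N'))).obj (.of S (L ⧸ P')))) :
    N.colon N' * P.colon P' ≤ Module.annihilator S
      (((Tor (ModuleCat S) n).obj (.of S (M ⧸ N))).obj (.of S (L ⧸ P))) := by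
  refine Ideal.mul_le.mpr fun r hr s hs ↦ Module.mem_annihilator.mpr fun m ↦ ?_
  obtain ⟨a, b, hab⟩ := exists_comp_eq_smul_id_of_mem_colon hN hr
  obtain ⟨c, d, hcd⟩ := exists_comp_eq_smul_id_of_mem_colon hP hs
  exact congrArg (fun φ ↦ φ.hom m) (mul_smul_id_tor_eq_zero (R := S) hab hcd hzero)

end Colon

section BaseChange

open ModuleCat MonoidalCategory

variable {C S : Type u} [CommRing C] [CommRing S] (f : C →+* S)

/-- The natural isomorphism `X ⊗[S] (S ⊗[C] M) ≅ X ⊗[C] M`, over `C`, for an `S`-module `X` and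
`C`-modules `M`. It reduces the exactness of `X ⊗[S] -` on an extended complex to the flatness of
`X` over `C`. -/
def projectionFormula (X : ModuleCat.{u} S) :
    extendScalars.{u, u, u} f ⋙ tensorLeft X ⋙ restrictScalars f ≅
      tensorLeft ((restrictScalars f).obj X) := by
  let := f.toAlgebra
  let : Module C X := Module.compHom X f
  have : IsScalarTower C S X := ⟨fun a b c ↦ mul_smul (f a) b c⟩
  refine NatIso.ofComponents (fun M ↦ LinearEquiv.toModuleIso
    ((TensorProduct.AlgebraTensorModule.cancelBaseChange C S S X M).restrictScalars C)) ?_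
  intro M N g
  ext z
  exact DFunLike.congr_fun (TensorProduct.AlgebraTensorModule.lTensor_comp_cancelBaseChange
    (R := C) (A := S) (B := S) (M := X) g.hom).symm z

variable {f}

lemma isZero_tor_extendScalars (hf : f.Flat) (X : ModuleCat.{u} S)
    [Module.Flat C ((restrictScalars f).obj X)] (M : ModuleCat.{u} C) (n : ℕ) :
    Limits.IsZero (((Tor (ModuleCat.{u} S) (n + 1)).obj X).obj ((extendScalars f).obj M)) := by
  have : (extendScalars.{u, u, u} f).Additive := (extendRestrictScalarsAdj f).left_adjoint_additive
  have := preservesFiniteLimits_extendScalars_of_flat hf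
  have : (extendScalars.{u, u, u} f).PreservesProjectiveObjects :=
    Functor.preservesProjectiveObjects_of_adjunction_of_preservesEpimorphisms
      (extendRestrictScalarsAdj f)
  let P := projectiveResolution M
  let Q := (extendScalars f).mapProjectiveResolution P
  have hexact : (((tensorLeft X).mapHomologicalComplex _).obj Q.complex).ExactAt (n + 1) := by
    refine (restrictScalars f).reflects_exact_of_faithful _ ?_
    exact ShortComplex.exact_of_iso
      ((P.complex.sc (n + 1)).mapNatIso (projectionFormula f X)).symm
      (Module.Flat.lTensor_shortComplex_exact _ _ (P.complex_exactAt_succ n))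
  exact hexact.isZero_homology.of_iso (Q.isoLeftDerivedObj (tensorLeft X) (n + 1))

lemma flat_quotient_map {R A C S : Type*} [CommRing R] [CommRing A] [CommRing C] [CommRing S]
    [Algebra R A] [Algebra R C] [Algebra R S] [Algebra A S] [Algebra C S] [IsScalarTower R A S]
    [IsScalarTower R C S] [Algebra.IsPushout R C A S] (I : Ideal A) [Module.Flat R (A ⧸ I)] :
    Module.Flat C (S ⧸ I.map (algebraMap A S)) :=
  Module.Flat.of_linearEquiv
    (((Algebra.TensorProduct.quotIdealMapEquivTensorQuot S I).toLinearEquiv.restrictScalars C).trans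
      (Algebra.IsPushout.cancelBaseChange R C A S (A ⧸ I)))

lemma isZero_tor_quotient_map {R A : Type*} {C S : Type u} [CommRing R] [CommRing A] [CommRing C]
    [CommRing S] [Algebra R A] [Algebra R C] [Algebra R S] (φ : A →ₐ[R] S) (ψ : C →ₐ[R] S)
    (h : Function.Bijective (Algebra.TensorProduct.productMap φ ψ)) [Module.Flat R A] (I : Ideal A)
    [Module.Flat R (A ⧸ I)] (J : Ideal C) (n : ℕ) :
    Limits.IsZero (((Tor (ModuleCat S) (n + 1)).obj (.of S (S ⧸ I.map φ))).obj
      (.of S (S ⧸ J.map ψ))) := by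
  let : Algebra A S := φ.toRingHom.toAlgebra
  let : Algebra C S := ψ.toRingHom.toAlgebra
  have : IsScalarTower R A S := .of_algHom φ
  have : IsScalarTower R C S := .of_algHom ψ
  have : Algebra.IsPushout R A C S :=
    ⟨.of_equiv (AlgEquiv.ofBijective (Algebra.TensorProduct.productLeftAlgHom (Algebra.ofId A S) ψ)
      h).toLinearEquiv (Algebra.TensorProduct.productMap_right_apply φ ψ)⟩
  have : Algebra.IsPushout R C A S := .symm inferInstance
  have hψ : ψ.toRingHom.Flat :=
    Module.Flat.of_linearEquiv (Algebra.IsPushout.equiv R C A S).symm.toLinearEquiv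
  have : Module.Flat C ((restrictScalars ψ.toRingHom).obj (.of S (S ⧸ I.map φ))) :=
    flat_quotient_map (R := R) (A := A) (C := C) (S := S) I
  refine (isZero_tor_extendScalars hψ (.of S (S ⧸ I.map φ)) (.of C (C ⧸ J)) n).of_iso
    (Functor.mapIso _ ?_)
  exact (Algebra.TensorProduct.quotIdealMapEquivTensorQuot S J).toLinearEquiv.toModuleIso

lemma bijective_productMap_rename {R α β σ : Type*} [CommSemiring R] {f : α → σ} {g : β → σ}
    (h : Function.Bijective (Sum.elim f g)) :
    Function.Bijective (Algebra.TensorProduct.productMap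
      (rename f : MvPolynomial α R →ₐ[R] _) (rename g)) := by
  let e := (tensorEquivSum R α β R).trans (renameEquiv R (Equiv.ofBijective _ h))
  have he : Algebra.TensorProduct.productMap (rename f : MvPolynomial α R →ₐ[R] _) (rename g) =
      e := by
    ext i <;> simp [e]
  rw [he]
  exact e.bijective

lemma isZero_tor_quotient_map_rename {k α β σ : Type u} [Field k] {f : α → σ} {g : β → σ}
    (h : Function.Bijective (Sum.elim f g)) (I : Ideal (MvPolynomial α k))
    (J : Ideal (MvPolynomial β k)) (n : ℕ) :
    Limits.IsZero (((Tor (ModuleCat (MvPolynomial σ k)) (n + 1)).obj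
      (.of _ (MvPolynomial σ k ⧸ I.map (rename f)))).obj
        (.of _ (MvPolynomial σ k ⧸ J.map (rename g)))) :=
  isZero_tor_quotient_map (rename f) (rename g) (bijective_productMap_rename h) I J n

end BaseChange

lemma mem_radical_colon_span {R : Type*} [CommSemiring R] {I : Ideal R} {s : Set R}
    (hs : (Ideal.span s).FG) {x : R} (h : ∀ f ∈ s, ∃ N, x ^ N * f ∈ I) :
    x ∈ (I.colon (Ideal.span s)).radical := by
  obtain ⟨t, hts, hst⟩ := (Submodule.fg_span_iff_fg_span_finset_subset s).mp hs
  choose! N hN using h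
  refine ⟨t.sup N, ?_⟩
  rw [Ideal.span, hst, Submodule.colon_span, Submodule.mem_colon]
  intro f hf
  obtain ⟨d, hd⟩ := Nat.exists_eq_add_of_le' (Finset.le_sup (f := N) hf)
  rw [hd, pow_add, smul_eq_mul, mul_assoc]
  exact I.mul_mem_left _ (hN f (hts hf))

section Monomial

variable {σ R k : Type*} [CommSemiring R] [Field k]

/-- An ideal of a polynomial ring is monomial if it is generated by monomials. -/
def IsMonomialIdeal (I : Ideal (MvPolynomial σ R)) : Prop :=
  ∃ s : Set (σ →₀ ℕ), I = Ideal.span ((fun m ↦ monomial m 1) '' s)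

lemma aeval_smul_X_monomial (t : σ → R) (m : σ →₀ ℕ) (a : R) :
    aeval (fun i ↦ t i • (X i : MvPolynomial σ R)) (monomial m a) =
      (m.prod fun i e ↦ t i ^ e) • monomial m a := by
  rw [aeval_monomial, monomial_eq, algebraMap_eq]
  simp only [smul_eq_C_mul, Finsupp.prod, mul_pow, Finset.prod_mul_distrib, map_prod, map_pow]
  ring

namespace IsMonomialIdeal

lemma map_rename {τ : Type*} {I : Ideal (MvPolynomial σ R)} (hI : IsMonomialIdeal I) (f : σ → τ) :
    IsMonomialIdeal (I.map (rename f)) := by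
  obtain ⟨s, rfl⟩ := hI
  refine ⟨Finsupp.mapDomain f '' s, ?_⟩
  simp only [Ideal.map_span, Set.image_image, rename_monomial]

lemma map_aeval_smul_X_le {I : Ideal (MvPolynomial σ R)} (hI : IsMonomialIdeal I) (t : σ → R) :
    I.map (aeval fun i ↦ t i • (X i : MvPolynomial σ R)) ≤ I := by
  obtain ⟨s, rfl⟩ := hI
  rw [Ideal.map_span, Ideal.span_le]
  rintro _ ⟨_, ⟨m, hm, rfl⟩, rfl⟩
  rw [aeval_smul_X_monomial]
  exact Submodule.smul_of_tower_mem _ _ (Ideal.subset_span ⟨m, hm, rfl⟩)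

lemma of_monomial_coeff_mem {I : Ideal (MvPolynomial σ k)}
    (h : ∀ f ∈ I, ∀ m, monomial m (f.coeff m) ∈ I) : IsMonomialIdeal I := by
  refine ⟨{m | monomial m 1 ∈ I}, le_antisymm (fun f hf ↦ ?_) ?_⟩
  · refine mem_ideal_span_monomial_image.mpr fun m hm ↦ ⟨m, ?_, le_rfl⟩
    have hunit : monomial m 1 = C (f.coeff m)⁻¹ * monomial m (f.coeff m) := by
      rw [C_mul_monomial, inv_mul_cancel₀ (mem_support_iff.mp hm)]
    rw [Set.mem_ofPred_eq, hunit]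
    exact I.mul_mem_left _ (h f hf m)
  · rw [Ideal.span_le]
    rintro _ ⟨m, hm, rfl⟩
    exact hm

lemma of_map_aeval_smul_X_le [Infinite k] {I : Ideal (MvPolynomial σ k)}
    (h : ∀ t : σ → k, (∀ i, t i ≠ 0) → I.map (aeval fun i ↦ t i • (X i : MvPolynomial σ k)) ≤ I) :
    IsMonomialIdeal I := by
  -- For a functional `l` vanishing on `I`, `l (f (t₁ x₁, t₂ x₂, …))` is a polynomial `q` in `t`
  -- with coefficients `l (f_m x^m)`, and it vanishes on the torus.
  refine of_monomial_coeff_mem fun f hf m ↦ ?_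
  rw [← Submodule.restrictScalars_mem k, ← Subspace.forall_mem_dualAnnihilator_apply_eq_zero_iff]
  intro l hl
  let q : MvPolynomial σ k := ∑ m ∈ f.support, monomial m (l (monomial m (f.coeff m)))
  have heval (t : σ → k) : eval t q = l (aeval (fun i ↦ t i • (X i : MvPolynomial σ k)) f) := by
    conv_rhs => rw [f.as_sum]
    simp only [q, map_sum, aeval_smul_X_monomial, map_smul, eval_monomial, smul_eq_mul, mul_comm]
  have hq : q = 0 := by
    refine funext_set (fun _ ↦ {0}ᶜ) (fun _ ↦ (Set.finite_singleton 0).infinite_compl)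
      fun t ht ↦ ?_
    rw [heval, map_zero]
    exact (Submodule.mem_dualAnnihilator _).mp hl _
      (h t (fun i ↦ ht i trivial) (Ideal.mem_map_of_mem _ hf))
  by_cases hm : m ∈ f.support
  · have hcoeff : q.coeff m = l (monomial m (f.coeff m)) := by
      classical
      simp only [q, coeff_sum, coeff_monomial, Finset.sum_ite_eq', hm, if_true]
    rw [← hcoeff, hq, coeff_zero]
  · rw [notMem_support_iff.mp hm, monomial_zero, map_zero]

end IsMonomialIdeal

end Monomial

section Rename

variable {σ τ R : Type*} [CommSemiring R]

lemma mapDomain_val_subtypeDomain (p : σ → Prop) [DecidablePred p] (m : σ →₀ ℕ) :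
    (m.subtypeDomain p).mapDomain Subtype.val = m.filter p := by
  ext i
  by_cases hi : p i
  · rw [Finsupp.filter_apply_pos _ _ hi]
    exact Finsupp.mapDomain_apply Subtype.val_injective _ (⟨i, hi⟩ : Subtype p)
  · rw [Finsupp.filter_apply_neg _ _ hi, Finsupp.mapDomain_of_notMem_range]
    simpa using hi

lemma mapDomain_eq_single_degree {f : σ → τ} {k : τ} {m : σ →₀ ℕ}
    (h : ∀ i ∈ m.support, f i = k) : m.mapDomain f = Finsupp.single k m.degree := by
  rw [Finsupp.mapDomain_congr h]
  exact (map_sum (Finsupp.singleAddHom k) m m.support).symm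

lemma rename_monomial_eq_X_pow_mul_monomial_filter {p : σ → Prop} [DecidablePred p] {f : σ → σ}
    {k : σ} (hp : ∀ i, p i → f i = i) (hnp : ∀ i, ¬ p i → f i = k) (m : σ →₀ ℕ) :
    rename f (monomial m (1 : R)) =
      X k ^ (m.filter fun i ↦ ¬ p i).degree * monomial (m.filter p) 1 := by
  have hfix : (m.filter p).mapDomain f = m.filter p :=
    (Finsupp.mapDomain_congr fun i hi ↦ hp i (Finset.mem_filter.mp hi).2).trans
      Finsupp.mapDomain_id
  have hconst : (m.filter fun i ↦ ¬ p i).mapDomain f = Finsupp.single k _ :=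
    mapDomain_eq_single_degree fun i hi ↦ hnp i (Finset.mem_filter.mp hi).2
  conv_lhs => rw [← m.filter_add_filter_not p]
  rw [rename_monomial, Finsupp.mapDomain_add, hfix, hconst, add_comm, X_pow_eq_monomial,
    monomial_mul, one_mul]

lemma IsMonomialIdeal.exists_le_map_rename {k : Type*} [Field k] [Finite σ]
    {I : Ideal (MvPolynomial σ k)} (hI : IsMonomialIdeal I) {p : σ → Prop} {f : σ → σ} {j : σ}
    (hp : ∀ i, p i → f i = i) (hnp : ∀ i, ¬ p i → f i = j) (hIf : I.map (rename f) ≤ I) :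
    ∃ I₀ : Ideal (MvPolynomial {i // p i} k), I ≤ I₀.map (rename Subtype.val) ∧
      X j ∈ (I.colon (I₀.map (rename Subtype.val))).radical := by
  classical
  obtain ⟨s, hs⟩ := hI
  refine ⟨Ideal.span ((fun m ↦ monomial (m.subtypeDomain p) 1) '' s), ?_, ?_⟩ <;>
    simp only [Ideal.map_span, Set.image_image, rename_monomial, mapDomain_val_subtypeDomain]
  · rw [hs, Ideal.span_le, Set.image_subset_iff]
    intro m hm
    have hfactor : monomial m (1 : k) =
        monomial (m.filter p) 1 * monomial (m.filter fun i ↦ ¬ p i) 1 := by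
      rw [monomial_mul, m.filter_add_filter_not p, one_mul]
    rw [Set.mem_preimage, hfactor]
    exact Ideal.mul_mem_right _ _ (Ideal.subset_span ⟨m, hm, rfl⟩)
  · refine mem_radical_colon_span (IsNoetherian.noetherian _) ?_
    rintro _ ⟨m, hm, rfl⟩
    refine ⟨(m.filter fun i ↦ ¬ p i).degree, ?_⟩
    rw [← rename_monomial_eq_X_pow_mul_monomial_filter hp hnp]
    exact hIf (Ideal.mem_map_of_mem _ (hs ▸ Ideal.subset_span ⟨m, hm, rfl⟩))

end Rename

section Borel

variable {K} {n}
variable {I : Ideal (PS K n)}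

namespace IsBorelFixed

lemma map_aeval_le (hI : IsBorelFixed K n I) {b : Matrix (Fin n) (Fin n) K}
    (hb : b.IsUpperTriangular) (hdiag : ∀ i, b i i ≠ 0) :
    I.map (aeval fun i ↦ ∑ j, b j i • (X j : PS K n)) ≤ I := by
  have hdet : b.det ≠ 0 := by
    rw [Matrix.det_of_isUpperTriangular hb]
    exact Finset.prod_ne_zero_iff.mpr fun i _ ↦ hdiag i
  exact (hI (Matrix.GeneralLinearGroup.mkOfDetNeZero b hdet) fun i j hij ↦ hb hij).le

lemma isMonomialIdeal [Infinite K] (hI : IsBorelFixed K n I) : IsMonomialIdeal I := by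
  refine .of_map_aeval_smul_X_le fun t ht ↦ ?_
  have hdiag (i : Fin n) : ∑ j, Matrix.diagonal t j i • (X j : PS K n) = t i • X i := by
    simp only [Matrix.diagonal_apply, ite_smul, zero_smul, Finset.sum_ite_eq', Finset.mem_univ,
      if_true]
  simpa only [hdiag] using hI.map_aeval_le (Matrix.blockTriangular_diagonal t)
    fun i ↦ (Matrix.diagonal_apply_eq t i).trans_ne (ht i)

-- The upper triangular substitution `x_i ↦ x_i + x_{f i}` (for `f i ≠ i`), followed by killing
-- every `x_i` with `f i ≠ i`, is `rename f`.
lemma map_rename_le [Infinite K] (hI : IsBorelFixed K n I) {f : Fin n → Fin n}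
    (hf : ∀ i, f (f i) = f i) (hle : ∀ i, f i ≤ i) : I.map (rename f) ≤ I := by
  let b : Matrix (Fin n) (Fin n) K := .of fun j i ↦ if j = i ∨ j = f i then 1 else 0
  let t (i : Fin n) : K := if f i = i then 1 else 0
  have hb : b.IsUpperTriangular := fun j i (hij : i < j) ↦
    if_neg (not_or.mpr ⟨hij.ne', ((hle i).trans_lt hij).ne'⟩)
  have hdiag (i : Fin n) : b i i ≠ 0 := by
    rw [show b i i = 1 from if_pos (.inl rfl)]
    exact one_ne_zero
  have hbt (i j : Fin n) : b j i * t j = if j = f i then 1 else 0 := by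
    by_cases hj : j = f i
    · simp [b, t, hj, hf]
    · by_cases hji : j = i
      · have hfi : f i ≠ i := fun h ↦ hj (hji.trans h.symm)
        simp [t, hji, hfi, hfi.symm]
      · simp [b, hj, hji]
  have hcomp : (rename f : PS K n →ₐ[K] PS K n) =
      (aeval fun i ↦ t i • (X i : PS K n)).comp (aeval fun i ↦ ∑ j, b j i • (X j : PS K n)) := by
    ext1 i
    simp only [rename_X, AlgHom.comp_apply, aeval_X, map_sum, map_smul, smul_smul, hbt, ite_smul,
      one_smul, zero_smul, Finset.sum_ite_eq', Finset.mem_univ, if_true]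
  calc I.map (rename f)
    _ = (I.map (aeval fun i ↦ ∑ j, b j i • (X j : PS K n))).map
          (aeval fun i ↦ t i • (X i : PS K n)) := by
        rw [hcomp, Ideal.map_mapₐ]
    _ ≤ I.map (aeval fun i ↦ t i • (X i : PS K n)) := Ideal.map_mono (hI.map_aeval_le hb hdiag)
    _ ≤ I := hI.isMonomialIdeal.map_aeval_smul_X_le t

end IsBorelFixed

lemma map_rename_rev_map_opMap (I : Ideal (PS K n)) :
    (I.map (opMap K n)).map (rename Fin.rev) = I := by
  have hrev : (rename Fin.rev).comp (opMap K n) = AlgHom.id K (PS K n) := by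
    ext1 i
    simp [opMap]
  rw [Ideal.map_mapₐ, hrev]
  exact Ideal.map_id I

lemma isMonomialIdeal_of_isBorelFixed_map_opMap [Infinite K]
    (hI : IsBorelFixed K n (I.map (opMap K n))) : IsMonomialIdeal I :=
  map_rename_rev_map_opMap I ▸ hI.isMonomialIdeal.map_rename Fin.rev

lemma map_rename_le_of_isBorelFixed_map_opMap [Infinite K]
    (hI : IsBorelFixed K n (I.map (opMap K n))) {f : Fin n → Fin n} (hf : ∀ i, f (f i) = f i)
    (hle : ∀ i, i ≤ f i) : I.map (rename f) ≤ I := by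
  have hrevf := hI.map_rename_le (f := fun i ↦ (f i.rev).rev) (fun i ↦ by simp [hf])
    fun i ↦ Fin.rev_le_iff.mpr (hle i.rev)
  have hcomp : (rename f).comp (rename Fin.rev) =
      (rename Fin.rev).comp (rename fun i ↦ (f i.rev).rev : PS K n →ₐ[K] PS K n) := by
    ext1 i
    simp
  conv_lhs => rw [← map_rename_rev_map_opMap I]
  rw [Ideal.map_mapₐ, hcomp, ← Ideal.map_mapₐ]
  exact (Ideal.map_mono hrevf).trans_eq (map_rename_rev_map_opMap I)

end Borel

section KrullDim

variable {σ k : Type*} [Field k]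

lemma ker_constantCoeff_le_of_forall_X_mem {R : Type*} [CommRing R] {P : Ideal (MvPolynomial σ R)}
    (hX : ∀ i, X i ∈ P) : RingHom.ker (constantCoeff (σ := σ) (R := R)) ≤ P := by
  have hmk : Ideal.Quotient.mk P = ((Ideal.Quotient.mk P).comp C).comp constantCoeff :=
    ringHom_ext (fun a ↦ by simp) fun i ↦ by simpa using Ideal.Quotient.eq_zero_iff_mem.mpr (hX i)
  intro f hf
  rw [← Ideal.Quotient.eq_zero_iff_mem, hmk, RingHom.comp_apply, hf, map_zero]

lemma isMaximal_of_forall_X_mem {P : Ideal (MvPolynomial σ k)} (hX : ∀ i, X i ∈ P) (hP : P ≠ ⊤) :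
    P.IsMaximal := by
  have hmax : (RingHom.ker (constantCoeff (σ := σ) (R := k))).IsMaximal :=
    RingHom.ker_isMaximal_of_surjective _ fun a ↦ ⟨C a, constantCoeff_C _ a⟩
  exact hmax.eq_of_le hP (ker_constantCoeff_le_of_forall_X_mem hX) ▸ hmax

lemma ringKrullDim_quotient_le_zero_of_forall_X_mem_radical {Q : Ideal (MvPolynomial σ k)}
    (hX : ∀ i, X i ∈ Q.radical) : ringKrullDim (MvPolynomial σ k ⧸ Q) ≤ 0 := by
  have hmin : ∀ P ∈ Q.minimalPrimes, P.IsMaximal := fun P hP ↦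
    isMaximal_of_forall_X_mem (fun i ↦ hP.1.1.radical_le_iff.mpr hP.1.2 (hX i)) hP.1.1.ne_top
  exact_mod_cast Ring.krullDimLE_iff.mp
    (Ideal.krullDimLE_zero_quotient_iff_forall_minimalPrimes_isMaximal.mpr hmin)

end KrullDim

/-- (From the proof of Proposition 2.10, Caviglia–Murai): if `I` is Borel-fixed, `J` is
opposite Borel-fixed and `i > 0`, then the Krull dimension of `Tor_i(S/I, S/J)`
(i.e. of `S/Ann(Tor_i(S/I, S/J))`) is zero. -/
theorem krullDim_tor_borel_eq_zero [Infinite K]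
    (I J : Ideal (PS K n)) (hI : IsBorelFixed K n I)
    (hJ : IsBorelFixed K n (Ideal.map (opMap K n) J)) (i : ℕ) (hi : 0 < i) :
    ringKrullDim (PS K n ⧸ Module.annihilator (PS K n)
      (((Tor (ModuleCat (PS K n)) i).obj (ModuleCat.of (PS K n) (PS K n ⧸ I))).obj
        (ModuleCat.of (PS K n) (PS K n ⧸ J)))) ≤ 0 := by
  obtain ⟨d, rfl⟩ := Nat.exists_eq_add_of_le' hi
  refine ringKrullDim_quotient_le_zero_of_forall_X_mem_radical fun k ↦ ?_
  obtain ⟨I', hII', hkI⟩ := hI.isMonomialIdeal.exists_le_map_rename (p := (· < k))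
    (fun _ hj ↦ min_eq_left hj.le) (fun _ hj ↦ min_eq_right (not_lt.mp hj))
    (hI.map_rename_le (f := (min · k)) (by simp) (by simp))
  obtain ⟨J', hJJ', hkJ⟩ := (isMonomialIdeal_of_isBorelFixed_map_opMap hJ).exists_le_map_rename
    (p := (¬ · < k)) (fun _ hj ↦ max_eq_left (not_lt.mp hj))
    (fun _ hj ↦ max_eq_right (not_not.mp hj).le)
    (map_rename_le_of_isBorelFixed_map_opMap hJ (f := (max · k)) (by simp) (by simp))
  have htor := isZero_tor_quotient_map_rename (Equiv.sumCompl (· < k)).bijective I' J' d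
  have hann := colon_mul_colon_le_annihilator_tor hII' hJJ' htor
  refine Ideal.radical_mono hann ?_
  rw [Ideal.radical_mul]
  exact ⟨hkI, hkJ⟩

end
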